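/- arXiv:1811.02126 — 12 statements merged into one kernel-verified Lean document; each statement's English description precedes it below -/
import Mathlib

section
/- Let (X, 𝒜) be a measurable space and let M be a maximal ideal of the ring M(X,𝒜). Then M is a real maximal ideal if and only if the family Z[M] = {Z(f) : f ∈ M} is closed under countable intersections, i.e., for every sequence (f_n)_{n∈ℕ} of elements of M there exists g ∈ M with Z(g) = ⋂_{n∈ℕ} Z(f_n). -/
/-!
Membership in an ideal of `M(X, 𝒜)` depends only on zero sets: if `f ∈ M` and `Z(f) ⊆ Z(g)` then
`g = (g / f) f ∈ M`, with the convention `0⁻¹ = 0` making the quotient measurable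
(`mem_of_Zset_subset`). Consequently elements of a proper ideal have zeros, and `Z[M]` is a filter
base of measurable sets.

If `M` is real and `f n ∈ M`, let `g` vanish on `⋂ Z(f n)` and equal `1 / (N + 1)` elsewhere, `N x`
being the first index with `f (N x) x ≠ 0`. For `g ≡ r` modulo `M` and each `K` there is a common
zero of `g - r, f 0, …, f K`; there `r = 0` or `0 < r < 1 / (K + 1)`. Hence `r = 0` and `g ∈ M`.

Conversely, given `f`, the product of `max (f - q) 0` and `min (f - q) 0` is zero, so one of the
factors lies in the prime ideal `M`; that is, `{f ≤ q}` or `{f ≥ q}` belongs to `Z[M]`. Closure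
under countable intersections makes `r = inf {q | {f ≤ q} ∈ Z[M]}` finite, and puts `{f = r}`, the
intersection of the sets `{r - 1/(n+1) ≤ f ≤ r + 1/(n+1)}`, into `Z[M]`.
-/

open MeasureTheory

/-- The ring `M(X, 𝒜)` of all real-valued measurable functions on a measurable
space `X`, as a subring of `X → ℝ` under pointwise operations. -/
def Mring (X : Type*) [MeasurableSpace X] : Subring (X → ℝ) where
  carrier := {f : X → ℝ | Measurable f}
  mul_mem' hf hg := hf.mul hg
  one_mem' := measurable_one
  add_mem' hf hg := hf.add hg
  zero_mem' := measurable_zero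
  neg_mem' hf := hf.neg

/-- The zero set `Z(f)` of a measurable function `f`. -/
def Zset {X : Type*} [MeasurableSpace X] (f : Mring X) : Set X :=
  {x : X | (f : X → ℝ) x = 0}

/-- The constant function with value `r`, as an element of `M(X, 𝒜)`. -/
def constM (X : Type*) [MeasurableSpace X] (r : ℝ) : Mring X :=
  ⟨fun _ => r, measurable_const⟩

lemma mem_of_Zset_subset {X : Type*} [MeasurableSpace X] (M : Ideal (Mring X))
    {f g : Mring X} (hf : f ∈ M) (h : ∀ x, f.1 x = 0 → g.1 x = 0) : g ∈ M := by
  have hq : Measurable fun x => g.1 x * (f.1 x)⁻¹ :=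
    Measurable.mul g.2 (Measurable.inv f.2)
  have : g = (⟨_, hq⟩ : Mring X) * f := by
    ext x
    change g.1 x = g.1 x * (f.1 x)⁻¹ * f.1 x
    by_cases hx : f.1 x = 0
    · simp [hx, h x hx]
    · field_simp
  rw [this]
  exact M.mul_mem_left _ hf

lemma exists_zero_of_mem {X : Type*} [MeasurableSpace X] {M : Ideal (Mring X)} (hM : M ≠ ⊤)
    {f : Mring X} (hf : f ∈ M) : ∃ x, f.1 x = 0 := by
  by_contra! h
  exact hM ((Ideal.eq_top_iff_one M).2 (mem_of_Zset_subset M hf fun x hx => absurd hx (h x)))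

/-- Finitely many elements of an ideal have their common zeros as the zeros of a single element,
the sum of their squares. -/
lemma exists_common_zero {X : Type*} [MeasurableSpace X] {M : Ideal (Mring X)} (hM : M ≠ ⊤)
    (f : ℕ → Mring X) (hf : ∀ n, f n ∈ M) {g : Mring X} (hg : g ∈ M) (K : ℕ) :
    ∃ x, g.1 x = 0 ∧ ∀ n < K, (f n).1 x = 0 := by
  have key : ∃ h ∈ M, ∀ x, h.1 x = 0 → g.1 x = 0 ∧ ∀ n < K, (f n).1 x = 0 := by
    induction K with
    | zero => exact ⟨g, hg, fun x hx => ⟨hx, by simp⟩⟩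
    | succ K ih =>
      obtain ⟨h, hh, hz⟩ := ih
      refine ⟨h * h + f K * f K, M.add_mem (M.mul_mem_left _ hh) (M.mul_mem_left _ (hf K)), ?_⟩
      intro x hx
      change h.1 x * h.1 x + (f K).1 x * (f K).1 x = 0 at hx
      have h1 : h.1 x = 0 := by nlinarith [mul_self_nonneg (h.1 x), mul_self_nonneg ((f K).1 x)]
      have h2 : (f K).1 x = 0 := by
        nlinarith [mul_self_nonneg (h.1 x), mul_self_nonneg ((f K).1 x)]
      refine ⟨(hz x h1).1, fun n hn => ?_⟩
      rcases Nat.lt_succ_iff_lt_or_eq.1 hn with hn | rfl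
      · exact (hz x h1).2 n hn
      · exact h2
  obtain ⟨h, hh, hz⟩ := key
  obtain ⟨x, hx⟩ := exists_zero_of_mem hM hh
  exact ⟨x, hz x hx⟩

/-- The function `g` vanishes exactly on `⋂ Z(f n)` and equals `1 / (N + 1)` at the points where
`N` is the first index with `f N` nonzero. -/
lemma exists_first_index_fun {X : Type*} [MeasurableSpace X] (f : ℕ → Mring X) :
    ∃ g : Mring X, Zset g = ⋂ n : ℕ, Zset (f n) ∧
      ∀ x, g.1 x ≠ 0 → ∃ N : ℕ, (f N).1 x ≠ 0 ∧ g.1 x = 1 / ((N : ℝ) + 1) := by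
  classical
  set S : Set X := ⋂ n : ℕ, Zset (f n) with hS
  have hZ : ∀ n, MeasurableSet (Zset (f n)) := fun n =>
    measurableSet_eq_fun (f n).2 measurable_const
  have hSm : MeasurableSet S := MeasurableSet.iInter hZ
  have hp : ∀ x, ∃ n, x ∉ Zset (f n) ∨ x ∈ S := by
    intro x
    by_cases hx : x ∈ S
    · exact ⟨0, Or.inr hx⟩
    · obtain ⟨n, hn⟩ := by simpa [hS] using hx
      exact ⟨n, Or.inl hn⟩
  have hN : Measurable fun x => Nat.find (hp x) :=
    measurable_find hp fun n => (hZ n).compl.union hSm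
  have hg : Measurable fun x => if x ∈ S then (0 : ℝ) else 1 / ((Nat.find (hp x) : ℝ) + 1) := by
    refine Measurable.ite hSm measurable_const ?_
    exact (measurable_from_nat (f := fun n : ℕ => 1 / ((n : ℝ) + 1))).comp hN
  refine ⟨⟨_, hg⟩, ?_, ?_⟩
  · ext x
    change (if x ∈ S then (0 : ℝ) else 1 / ((Nat.find (hp x) : ℝ) + 1)) = 0 ↔ x ∈ S
    by_cases hx : x ∈ S
    · simp [hx]
    · simp only [hx, if_false, iff_false]
      positivity
  · intro x hx
    change (if x ∈ S then (0 : ℝ) else 1 / ((Nat.find (hp x) : ℝ) + 1)) ≠ 0 at hx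
    have hxS : x ∉ S := fun h => hx (if_pos h)
    refine ⟨Nat.find (hp x), (Nat.find_spec (hp x)).resolve_right hxS, ?_⟩
    exact if_neg hxS

lemma closed_of_real {X : Type*} [MeasurableSpace X] {M : Ideal (Mring X)} (hM : M ≠ ⊤)
    (hr : ∀ f : Mring X, ∃ r : ℝ, f - constM X r ∈ M) (f : ℕ → Mring X) (hf : ∀ n, f n ∈ M) :
    ∃ g ∈ M, Zset g = ⋂ n : ℕ, Zset (f n) := by
  obtain ⟨g, hgZ, hg⟩ := exists_first_index_fun f
  obtain ⟨r, hr⟩ := hr g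
  refine ⟨g, ?_, hgZ⟩
  have hx : ∀ K : ℕ, ∃ x, g.1 x = r ∧ ∀ n < K, (f n).1 x = 0 := by
    intro K
    obtain ⟨x, h1, h2⟩ := exists_common_zero hM f hf hr K
    exact ⟨x, sub_eq_zero.1 h1, h2⟩
  have hr0 : r = 0 := by
    by_contra hne
    obtain ⟨x, hxr, -⟩ := hx 0
    obtain ⟨N, -, hN⟩ := hg x (hxr ▸ hne)
    -- The value `r = 1 / (N + 1)` is also attained where `f 0, …, f N` vanish, which forces a
    -- first nonvanishing index larger than `N`.
    obtain ⟨y, hyr, hy⟩ := hx (N + 1)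
    obtain ⟨N', hN', hyN⟩ := hg y (hyr ▸ hne)
    have hlt : N < N' := by
      by_contra! hle
      exact hN' (hy N' (Nat.lt_succ_of_le hle))
    have := Nat.one_div_lt_one_div (α := ℝ) hlt
    rw [← hN, ← hyN, hxr, hyr] at this
    exact lt_irrefl _ this
  subst hr0
  exact mem_of_Zset_subset M hr fun x hx => by simpa using (sub_eq_zero.1 hx : g.1 x = 0)

lemma real_of_closed {X : Type*} [MeasurableSpace X] {M : Ideal (Mring X)} (hM : M.IsPrime)
    (hc : ∀ f : ℕ → Mring X, (∀ n : ℕ, f n ∈ M) → ∃ g ∈ M, Zset g = ⋂ n : ℕ, Zset (f n))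
    (f : Mring X) : ∃ r : ℝ, f - constM X r ∈ M := by
  have hc' : ∀ u : ℕ → Mring X, (∀ n, u n ∈ M) → ∀ h : Mring X,
      (∀ x, (∀ n, (u n).1 x = 0) → h.1 x = 0) → h ∈ M := by
    intro u hu h hh
    obtain ⟨g, hg, hgZ⟩ := hc u hu
    refine mem_of_Zset_subset M hg fun x hx => hh x fun n => ?_
    have : x ∈ Zset g := hx
    rw [hgZ] at this
    exact Set.mem_iInter.1 this n
  have hcz : ∀ u : ℕ → Mring X, (∀ n, u n ∈ M) → ∃ x, ∀ n, (u n).1 x = 0 := by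
    intro u hu
    by_contra! h
    refine hM.ne_top ((Ideal.eq_top_iff_one M).2 (hc' u hu 1 fun x hx => ?_))
    obtain ⟨n, hn⟩ := h x
    exact absurd (hx n) hn
  let P : ℝ → Mring X := fun q => ⟨fun x => max (f.1 x - q) 0,
    Measurable.max (Measurable.sub f.2 measurable_const) measurable_const⟩
  let N : ℝ → Mring X := fun q => ⟨fun x => min (f.1 x - q) 0,
    Measurable.min (Measurable.sub f.2 measurable_const) measurable_const⟩
  have hP : ∀ q x, (P q).1 x = 0 ↔ f.1 x ≤ q := fun q x => by
    change max (f.1 x - q) 0 = 0 ↔ _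
    rw [max_eq_right_iff, sub_nonpos]
  have hN : ∀ q x, (N q).1 x = 0 ↔ q ≤ f.1 x := fun q x => by
    change min (f.1 x - q) 0 = 0 ↔ _
    rw [min_eq_right_iff, sub_nonneg]
  have hPN : ∀ q, P q ∈ M ∨ N q ∈ M := by
    intro q
    apply hM.mem_or_mem
    have : P q * N q = 0 := by
      ext x
      change (P q).1 x * (N q).1 x = 0
      rcases le_total (f.1 x) q with h | h
      · rw [(hP q x).2 h, zero_mul]
      · rw [(hN q x).2 h, mul_zero]
    rw [this]
    exact M.zero_mem
  have hup : ∀ p q, p ≤ q → P p ∈ M → P q ∈ M := fun p q hpq h =>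
    mem_of_Zset_subset M h fun x hx => (hP q x).2 (((hP p x).1 hx).trans hpq)
  set S : Set ℝ := {q | P q ∈ M} with hS
  have hne : S.Nonempty := by
    by_contra hemp
    have h : ∀ n : ℕ, N n ∈ M := fun n => (hPN n).resolve_left fun h => hemp ⟨_, h⟩
    obtain ⟨x, hx⟩ := hcz _ h
    obtain ⟨n, hn⟩ := exists_nat_gt (f.1 x)
    exact absurd ((hN _ _).1 (hx n)) (not_le.2 hn)
  have hbdd : BddBelow S := by
    by_contra hb
    have h : ∀ n : ℕ, P (-n) ∈ M := by
      intro n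
      by_contra hn
      exact hb ⟨-n, fun q hq => le_of_not_ge fun hle => hn (hup _ _ hle hq)⟩
    obtain ⟨x, hx⟩ := hcz _ h
    obtain ⟨n, hn⟩ := exists_nat_gt (-f.1 x)
    have := (hP _ _).1 (hx n)
    linarith
  set r := sInf S with hr
  have hPr : ∀ n : ℕ, P (r + 1 / ((n : ℝ) + 1)) ∈ M := by
    intro n
    obtain ⟨q, hq, hlt⟩ := exists_lt_of_csInf_lt hne
      (lt_add_of_pos_right r (Nat.one_div_pos_of_nat (α := ℝ) (n := n)))
    exact hup _ _ hlt.le hq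
  have hNr : ∀ n : ℕ, N (r - 1 / ((n : ℝ) + 1)) ∈ M := by
    intro n
    refine (hPN _).resolve_left fun h => ?_
    have h1 : r ≤ r - 1 / ((n : ℝ) + 1) := csInf_le hbdd h
    have h2 := Nat.one_div_pos_of_nat (α := ℝ) (n := n)
    linarith
  have hle : ∀ a : ℝ, (∀ n : ℕ, a ≤ 1 / ((n : ℝ) + 1)) → a ≤ 0 := by
    intro a ha
    by_contra! hpos
    obtain ⟨n, hn⟩ := exists_nat_one_div_lt hpos
    exact absurd (ha n) (not_le.2 hn)
  have hPr' : P r ∈ M := hc' _ hPr _ fun x hx => (hP r x).2 <| sub_nonpos.1 <| hle _ fun n => by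
    have := (hP _ _).1 (hx n)
    linarith
  have hNr' : N r ∈ M := hc' _ hNr _ fun x hx => (hN r x).2 <| sub_nonpos.1 <| hle _ fun n => by
    have := (hN _ _).1 (hx n)
    linarith
  refine ⟨r, ?_⟩
  have : f - constM X r = P r + N r := by
    ext x
    change f.1 x - r = max (f.1 x - r) 0 + min (f.1 x - r) 0
    rw [max_add_min, add_zero]
  rw [this]
  exact M.add_mem hPr' hNr'

/-- A maximal ideal `M` of `M(X,𝒜)` is real (every `f` is congruent mod `M` to a
constant) iff `Z[M]` is closed under countable intersections. -/
theorem stmt0 {X : Type*} [MeasurableSpace X] (M : Ideal (Mring X)) (hM : M.IsMaximal) :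
    (∀ f : Mring X, ∃ r : ℝ, f - constM X r ∈ M) ↔
      ∀ f : ℕ → Mring X, (∀ n : ℕ, f n ∈ M) →
        ∃ g ∈ M, Zset g = ⋂ n : ℕ, Zset (f n) :=
  ⟨closed_of_real hM.ne_top, real_of_closed hM.isPrime⟩
end

section
/- Let (X, 𝒜) be a separated measurable space and let ψ : X → {maximal ideals of M(X,𝒜)} be given by ψ(p) = M_p. Then ψ is injective, its range is exactly the set FMax(X,𝒜) of fixed maximal ideals of M(X,𝒜), and for every subset E ⊆ X one has E ∈ 𝒜 if and only if there exists f ∈ M(X,𝒜) with ψ(E) = B_f^F, where B_f^F = {M_p : p ∈ X, f(p) = 0}. In particular, (X,𝒜) is isomorphic as a measurable space to (FMax(X,𝒜), 𝓑^F) where 𝓑^F = {B_f^F : f ∈ M(X,𝒜)}. -/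
/-!
The measurable sets are exactly the zero sets of measurable functions: `E` is the zero set
of the indicator of its complement (`exists_Zset_eq`), and zero sets are preimages of the
measurable set `{0}`. Hence a measurable set separating `p` from `q` gives a function
lying in exactly one of `M_p`, `M_q`, so `p ↦ M_p` is injective, and `ψ(E) = ψ(Z(f))` holds
only if `E = Z(f)`. Each `M_p` is maximal as the kernel of evaluation onto `ℝ`; conversely
a maximal ideal whose functions all vanish at `p` is contained in the proper ideal `M_p`,
hence equal to it.
-/

open MeasureTheory

/-- The fixed ideal `M_p = {f ∈ M(X,𝒜) : f(p) = 0}`. -/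
def Mp (X : Type*) [MeasurableSpace X] (p : X) : Ideal (Mring X) where
  carrier := {f : Mring X | (f : X → ℝ) p = 0}
  add_mem' := by
    intro a b ha hb
    simp only [Set.mem_setOf_eq] at *
    show ((a + b : Mring X) : X → ℝ) p = 0
    simp [ha, hb]
  zero_mem' := by simp only [Set.mem_setOf_eq]; rfl
  smul_mem' := by
    intro c f hf
    simp only [Set.mem_setOf_eq, smul_eq_mul] at *
    show ((c * f : Mring X) : X → ℝ) p = 0
    simp [hf]

/-- A measurable space is separated if any two distinct points are separated by
a measurable set containing exactly one of them. -/
def Separated (X : Type*) [MeasurableSpace X] : Prop :=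
  ∀ p q : X, p ≠ q → ∃ E : Set X, MeasurableSet E ∧ Xor' (p ∈ E) (q ∈ E)

/-- For a measurable `E`, the indicator of the complement is a measurable function
with zero set `E`. -/
lemma exists_Zset_eq {X : Type*} [MeasurableSpace X] {E : Set X} (hE : MeasurableSet E) :
    ∃ f : Mring X, Zset f = E := by
  have hm : Measurable (Eᶜ.indicator (fun _ => (1 : ℝ))) := measurable_const.indicator hE.compl
  refine ⟨⟨_, hm⟩, ?_⟩
  ext x
  simp [Zset]

lemma measurableSet_Zset {X : Type*} [MeasurableSpace X] (f : Mring X) :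
    MeasurableSet (Zset f) :=
  f.2 (measurableSet_singleton (0 : ℝ))

lemma mem_Mp_iff {X : Type*} [MeasurableSpace X] {p : X} {f : Mring X} :
    f ∈ Mp X p ↔ p ∈ Zset f := Iff.rfl

/-- `M_p` is the kernel of evaluation at `p`, which maps onto the field `ℝ` because
constant functions are measurable. -/
lemma Mp_isMaximal {X : Type*} [MeasurableSpace X] (p : X) : (Mp X p).IsMaximal := by
  let ev : Mring X →+* ℝ := (Pi.evalRingHom (fun _ : X => ℝ) p).comp (Mring X).subtype
  have hsurj : Function.Surjective ev := fun c => ⟨⟨fun _ => c, measurable_const⟩, rfl⟩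
  have hker : Mp X p = RingHom.ker ev := by
    ext f
    exact Iff.rfl
  rw [hker]
  exact RingHom.ker_isMaximal_of_surjective ev hsurj

lemma Mp_injective {X : Type*} [MeasurableSpace X] (hsep : Separated X) :
    Function.Injective (Mp X) := by
  intro p q hpq
  by_contra hne
  obtain ⟨E, hE, hx⟩ := hsep p q hne
  obtain ⟨f, rfl⟩ := exists_Zset_eq hE
  have hiff : p ∈ Zset f ↔ q ∈ Zset f := by
    rw [← mem_Mp_iff, ← mem_Mp_iff, hpq]
  rcases hx with ⟨hp, hq⟩ | ⟨hq, hp⟩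
  · exact hq (hiff.1 hp)
  · exact hp (hiff.2 hq)

/-- For a separated measurable space, `p ↦ M_p` is injective, its range is the
set of fixed maximal ideals, and `E` is measurable iff `ψ(E) = B_f^F` for some
`f`, where `B_f^F = {M_p : f(p) = 0}`.  Hence `(X,𝒜)` is isomorphic to
`(FMax(X,𝒜), 𝓑^F)`. -/
theorem stmt2 {X : Type*} [MeasurableSpace X] (hsep : Separated X) :
    Function.Injective (Mp X) ∧
    Set.range (Mp X) =
      {M : Ideal (Mring X) | M.IsMaximal ∧ (⋂ f ∈ M, Zset f).Nonempty} ∧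
    ∀ E : Set X, MeasurableSet E ↔ ∃ f : Mring X, Mp X '' E = Mp X '' Zset f := by
  have hinj := Mp_injective hsep
  refine ⟨hinj, ?_, fun E => ⟨fun hE => ?_, ?_⟩⟩
  · ext M
    constructor
    · rintro ⟨p, rfl⟩
      exact ⟨Mp_isMaximal p, p, Set.mem_iInter₂.2 fun f hf => hf⟩
    · rintro ⟨hM, p, hp⟩
      have hle : M ≤ Mp X p := fun f hf => Set.mem_iInter₂.1 hp f hf
      exact ⟨p, (hM.eq_of_le (Mp_isMaximal p).ne_top hle).symm⟩
  · obtain ⟨f, hf⟩ := exists_Zset_eq hE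
    exact ⟨f, by rw [hf]⟩
  · rintro ⟨f, hf⟩
    rw [hinj.image_injective hf]
    exact measurableSet_Zset f
end

section
/- Let (X,𝒜) be a measurable space, μ a measure on (X,𝒜), and let u ∈ M(X,𝒜) be a μ-unit, i.e., μ(Z(u)) = 0. Then there exists a positive unit w of M(X,𝒜) such that every f ∈ m_μ(u,w) is also a μ-unit, i.e., μ(Z(f)) = 0. (Hence the set of μ-units is open in the m_μ-topology.) -/
open MeasureTheory

/-- If `u` is a μ-unit (`μ(Z(u)) = 0`), then there is a positive unit `w` such
that every `f ∈ m_μ(u, w)` is also a μ-unit.  Hence the set of μ-units is open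
in the `m_μ`-topology. -/
theorem stmt8 {X : Type*} [MeasurableSpace X] (μ : Measure X) (u : Mring X)
    (hu : μ (Zset u) = 0) :
    ∃ w : Mring X, (∀ x : X, 0 < (w : X → ℝ) x) ∧
      ∀ f : Mring X,
        (∀ᵐ x ∂μ, |(f : X → ℝ) x - (u : X → ℝ) x| < (w : X → ℝ) x) →
        μ (Zset f) = 0 := by
  classical
  have hum : Measurable (u : X → ℝ) := u.2
  have hZ : MeasurableSet {x : X | (u : X → ℝ) x = 0} := hum (measurableSet_singleton 0)
  -- `w = |u|` off `Z(u)`; on the null set `Z(u)` any positive value will do.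
  refine ⟨⟨fun x => if (u : X → ℝ) x = 0 then 1 else |(u : X → ℝ) x|,
    Measurable.ite hZ measurable_const hum.abs⟩, fun x => ?_, fun f hf => ?_⟩
  · by_cases h : (u : X → ℝ) x = 0
    · simp [h]
    · simp [h]
  · have hu' : ∀ᵐ x ∂μ, (u : X → ℝ) x ≠ 0 := measure_eq_zero_iff_ae_notMem.mp hu
    refine measure_eq_zero_iff_ae_notMem.mpr ?_
    filter_upwards [hf, hu'] with x hx hux hfx
    have hfx' : (f : X → ℝ) x = 0 := hfx
    -- At a common point of `Z(f)` and the complement of `Z(u)`, `hx` reads `|u x| < |u x|`.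
    simp [hux, hfx'] at hx
end

section
/- Let (X,𝒜) be a measurable space, μ a measure on (X,𝒜), and let M be a maximal ideal of M(X,𝒜) containing no μ-unit, i.e., μ(Z(g)) ≠ 0 for every g ∈ M. Then M is closed in the m_μ-topology; concretely, for every f ∈ M(X,𝒜) with f ∉ M there exists a positive unit w of M(X,𝒜) such that m_μ(f,w) ∩ M = ∅. -/
/-!
If `f ∉ M`, maximality gives `a` and `m ∈ M` with `a * f + m = 1`. Take `w = 1 / (1 + |a|)`.
Where `m` vanishes, `|a| * |f| = 1`, so `|f| > w` there. If some `h ∈ M` satisfied `|h - f| < w`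
almost everywhere, then at almost every point of `Z(h) ∩ Z(m)` one would have both `|f| < w` and
`|f| > w`. So `h * h + m * m ∈ M`, whose zero set is `Z(h) ∩ Z(m)`, would be a `μ`-unit, which `M`
does not contain.
-/

open MeasureTheory

/-- A maximal ideal of `M(X,𝒜)` containing no μ-unit is closed in the
`m_μ`-topology: for every `f ∉ M` there is a positive unit `w` with
`m_μ(f, w) ∩ M = ∅`. -/
theorem stmt9 {X : Type*} [MeasurableSpace X] (μ : Measure X)
    (M : Ideal (Mring X)) (hM : M.IsMaximal)
    (hnounit : ∀ g ∈ M, μ (Zset g) ≠ 0) :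
    ∀ f : Mring X, f ∉ M →
      ∃ w : Mring X, (∀ x : X, 0 < (w : X → ℝ) x) ∧
        ∀ h ∈ M,
          ¬ (∀ᵐ x ∂μ, |(h : X → ℝ) x - (f : X → ℝ) x| < (w : X → ℝ) x) := by
  intro f hf
  obtain ⟨a, m, hmM, ham⟩ := hM.exists_inv hf
  have ham' : ∀ x, (a : X → ℝ) x * (f : X → ℝ) x + (m : X → ℝ) x = 1 := fun x =>
    congrFun (congrArg Subtype.val ham) x
  have ha : Measurable (a : X → ℝ) := a.2
  refine ⟨⟨fun x => (1 + |(a : X → ℝ) x|)⁻¹, ?_⟩, fun x => ?_, fun h hhM hae => ?_⟩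
  · exact (measurable_const.add ha.abs).inv
  · change 0 < (1 + |(a : X → ℝ) x|)⁻¹
    positivity
  -- The zero set of `h * h + m * m` is `Z(h) ∩ Z(m)`, which turns out to be null.
  apply hnounit (h * h + m * m) (M.add_mem (M.mul_mem_left h hhM) (M.mul_mem_left m hmM))
  suffices H : ∀ᵐ x ∂μ, x ∉ Zset (h * h + m * m) from measure_eq_zero_iff_ae_notMem.2 H
  filter_upwards [hae] with x hx hz
  have hz' : (h : X → ℝ) x * (h : X → ℝ) x + (m : X → ℝ) x * (m : X → ℝ) x = 0 := hz
  obtain ⟨h0, m0⟩ := mul_self_add_mul_self_eq_zero.1 hz'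
  have h1 : |(a : X → ℝ) x| * |(f : X → ℝ) x| = 1 := by
    rw [← abs_mul, show (a : X → ℝ) x * (f : X → ℝ) x = 1 by linarith [ham' x], abs_one]
  have hx' : |(h : X → ℝ) x - (f : X → ℝ) x| < (1 + |(a : X → ℝ) x|)⁻¹ := hx
  rw [h0, zero_sub, abs_neg, lt_inv_comm₀ (by
    by_contra! hle
    nlinarith [abs_nonneg ((a : X → ℝ) x)]) (by positivity),
    ← eq_inv_of_mul_eq_one_left h1] at hx'
  linarith
end

section
/- Let (X,𝒜) be a measurable space and μ a measure on (X,𝒜) such that every f ∈ M(X,𝒜) is μ-essentially bounded, i.e., L^∞(μ) = M(X,𝒜). Then for every g ∈ M(X,𝒜) and every positive unit u of M(X,𝒜) there exists λ > 0 such that every f ∈ M(X,𝒜) with ‖f − g‖_∞ ≤ λ belongs to m_μ(g,u). (Hence the essential sup-norm topology on L^∞(μ) coincides with the relative m_μ-topology.) -/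
open MeasureTheory

/-- If every measurable function is μ-essentially bounded (`L^∞(μ) = M(X,𝒜)`),
then every basic `m_μ`-neighbourhood `m_μ(g,u)` contains an essential sup-norm
ball `{f : ‖f - g‖_∞ ≤ λ}` with `λ > 0`. -/
theorem stmt10 {X : Type*} [MeasurableSpace X] (μ : Measure X)
    (hall : ∀ f : Mring X, ∃ C : ℝ, 0 ≤ C ∧ μ {x : X | C < |(f : X → ℝ) x|} = 0)
    (g u : Mring X) (hu : ∀ x : X, 0 < (u : X → ℝ) x) :
    ∃ lam : ℝ, 0 < lam ∧
      ∀ f : Mring X,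
        μ {x : X | lam < |(f : X → ℝ) x - (g : X → ℝ) x|} = 0 →
        (∀ᵐ x ∂μ, |(f : X → ℝ) x - (g : X → ℝ) x| < (u : X → ℝ) x) := by
  -- The reciprocal `u⁻¹` is measurable, hence essentially bounded by some `C`, so `u ≥ 1 / C` a.e.;
  -- the radius `(C + 1)⁻¹` makes this bound strict and covers the case `C = 0`.
  obtain ⟨C, hC, hC0⟩ := hall ⟨fun x => ((u : X → ℝ) x)⁻¹, Measurable.inv u.2⟩
  refine ⟨(C + 1)⁻¹, by positivity, fun f hf => ?_⟩
  have h1 : ∀ᵐ x ∂μ, ¬ C < |((u : X → ℝ) x)⁻¹| := measure_eq_zero_iff_ae_notMem.mp hC0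
  have h2 : ∀ᵐ x ∂μ, ¬ (C + 1)⁻¹ < |(f : X → ℝ) x - (g : X → ℝ) x| :=
    measure_eq_zero_iff_ae_notMem.mp hf
  filter_upwards [h1, h2] with x hx1 hx2
  have h3 : ((u : X → ℝ) x)⁻¹ ≤ C := (le_abs_self _).trans (not_lt.mp hx1)
  exact (not_lt.mp hx2).trans_lt (inv_lt_of_inv_lt₀ (hu x) (by linarith))
end

section
/- Let (X,𝒜) be a measurable space, μ a measure on (X,𝒜), and suppose f ∈ M(X,𝒜) satisfies f(x) ≥ 1 for all x ∈ X and f ∉ L^∞(μ). Set g = 1/f, a positive unit of M(X,𝒜). Then m_μ(0,g) ⊆ L^∞(μ), and for every ε > 0 the constant function with value ε/2 does not belong to m_μ(0,g). (Hence the essential sup-norm topology on L^∞(μ) is strictly weaker than the relative m_μ-topology.) -/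
open MeasureTheory

/-- If `f ≥ 1` is not μ-essentially bounded and `g = 1/f`, then
`m_μ(0,g) ⊆ L^∞(μ)` while for every `ε > 0` the constant function `ε/2` does
not belong to `m_μ(0,g)`. -/
theorem stmt11 {X : Type*} [MeasurableSpace X] (μ : Measure X)
    (f : Mring X) (hf1 : ∀ x : X, 1 ≤ (f : X → ℝ) x)
    (hf : ¬ ∃ C : ℝ, 0 ≤ C ∧ μ {x : X | C < |(f : X → ℝ) x|} = 0)
    (g : Mring X) (hg : ∀ x : X, (g : X → ℝ) x = ((f : X → ℝ) x)⁻¹) :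
    (∀ h : Mring X,
        (∀ᵐ x ∂μ, |(h : X → ℝ) x| < (g : X → ℝ) x) →
        ∃ C : ℝ, 0 ≤ C ∧ μ {x : X | C < |(h : X → ℝ) x|} = 0) ∧
    (∀ ε : ℝ, 0 < ε → ¬ (∀ᵐ x ∂μ, |(ε / 2 : ℝ)| < (g : X → ℝ) x)) := by
  have hle : ∀ x, (g : X → ℝ) x ≤ 1 := fun x => by
    rw [hg x]; exact inv_le_one_of_one_le₀ (hf1 x)
  -- If `ε / 2 < 1 / f` almost everywhere, then `f < 2 / ε` almost everywhere, so `2 / ε` is an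
  -- essential bound for `f`.
  refine ⟨fun h hh => ⟨1, zero_le_one, ?_⟩, fun ε hε hlt => hf ⟨2 / ε, by positivity, ?_⟩⟩
  · refine measure_mono_null ?_ (ae_iff.1 hh)
    intro x (hx : (1 : ℝ) < _) hx'
    exact lt_asymm hx (hx'.trans_le (hle x))
  · refine measure_mono_null ?_ (ae_iff.1 hlt)
    intro x (hx : 2 / ε < _) hx'
    have hpos : 0 < (f : X → ℝ) x := zero_lt_one.trans_le (hf1 x)
    rw [abs_of_pos hpos] at hx
    rw [hg x, abs_of_pos (half_pos hε), lt_inv_comm₀ (half_pos hε) hpos, inv_div] at hx'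
    exact lt_asymm hx hx'
end

section
/- Let (X,𝒜) be a measurable space and μ a measure on (X,𝒜) such that L^∞(μ) ≠ M(X,𝒜), i.e., there exists a measurable f : X → ℝ that is not μ-essentially bounded. Then the m_μ-topology on M(X,𝒜) is not first countable at 0: for every sequence (u_n)_{n∈ℕ} of positive units of M(X,𝒜) there exists a positive unit u of M(X,𝒜) such that for every n ∈ ℕ there exists h ∈ m_μ(0,u_n) with h ∉ m_μ(0,u). -/
/-! A diagonal argument. Let `f` be measurable and not essentially bounded, and let `u x` be half
the minimum of `U 0 x, …, U k x`, where `k = ⌊|f x|⌋₊` varies with `x`. This is a positive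
measurable function, and `u ≤ U n / 2` wherever `|f| > n`, a set of positive measure. Hence
`h = U n / 2` satisfies `|h| < U n` everywhere, while `|h| < u` fails on a non-null set. -/

open MeasureTheory

/-- If `L^∞(μ) ≠ M(X,𝒜)` then the `m_μ`-topology is not first countable at
`0`: no countable family `m_μ(0, u_n)` is a neighbourhood base at `0`. -/
theorem stmt12 {X : Type*} [MeasurableSpace X] (μ : Measure X)
    (hne : ∃ f : Mring X, ¬ ∃ C : ℝ, 0 ≤ C ∧ μ {x : X | C < |(f : X → ℝ) x|} = 0) :
    ∀ U : ℕ → Mring X, (∀ n : ℕ, ∀ x : X, 0 < (U n : X → ℝ) x) →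
      ∃ u : Mring X, (∀ x : X, 0 < (u : X → ℝ) x) ∧
        ∀ n : ℕ, ∃ h : Mring X,
          (∀ᵐ x ∂μ, |(h : X → ℝ) x| < (U n : X → ℝ) x) ∧
          ¬ (∀ᵐ x ∂μ, |(h : X → ℝ) x| < (u : X → ℝ) x) := by
  obtain ⟨f, hf⟩ := hne
  intro U hU
  have hUm (n : ℕ) : Measurable (U n : X → ℝ) := (U n).2
  have hfm : Measurable (f : X → ℝ) := f.2
  let V : ℕ × X → ℝ := fun p =>
    (Finset.range (p.1 + 1)).inf' Finset.nonempty_range_add_one fun i => (U i : X → ℝ) p.2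
  -- Joint measurability: the first factor is countable and discrete.
  have hV : Measurable V := by
    refine measurable_from_prod_countable_right fun k => ?_
    have hk : Measurable ((Finset.range (k + 1)).inf' Finset.nonempty_range_add_one
        fun i => (U i : X → ℝ)) :=
      Finset.inf'_induction _ _ (fun _ h₁ _ h₂ => h₁.inf h₂) fun i _ => hUm i
    convert hk using 1
    ext x
    simp [V, Finset.inf'_apply]
  have ha : Measurable fun x => ⌊|(f : X → ℝ) x|⌋₊ := Nat.measurable_floor.comp hfm.abs
  refine ⟨⟨fun x => V (⌊|(f : X → ℝ) x|⌋₊, x) / 2,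
    (hV.comp (ha.prodMk measurable_id)).div_const 2⟩, fun x => ?_, fun n => ?_⟩
  · refine half_pos ?_
    simp only [V, Finset.lt_inf'_iff]
    exact fun i _ => hU i x
  · refine ⟨⟨fun x => (U n : X → ℝ) x / 2, (hUm n).div_const 2⟩, ?_, fun hlt => ?_⟩
    · refine Filter.Eventually.of_forall fun x => ?_
      change |(U n : X → ℝ) x / 2| < _
      rw [abs_of_pos (half_pos (hU n x))]
      exact half_lt_self (hU n x)
    · refine hf ⟨n, n.cast_nonneg, measure_mono_null (fun x hx => ?_) (ae_iff.mp hlt)⟩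
      change ¬ (|(U n : X → ℝ) x / 2| < V (⌊|(f : X → ℝ) x|⌋₊, x) / 2)
      have hn : n ≤ ⌊|(f : X → ℝ) x|⌋₊ := Nat.le_floor (le_of_lt hx)
      have hle : V (⌊|(f : X → ℝ) x|⌋₊, x) ≤ (U n : X → ℝ) x :=
        Finset.inf'_le (fun i => (U i : X → ℝ) x) (Finset.mem_range.mpr (Nat.lt_succ_of_le hn))
      rw [abs_of_pos (half_pos (hU n x))]
      linarith
end

section
/- Let (X,𝒜) be a measurable space and μ a measure on (X,𝒜). Then L^∞(μ) is both open and closed in the m_μ-topology on M(X,𝒜); concretely, for every g ∈ L^∞(μ) one has m_μ(g,1) ⊆ L^∞(μ), and for every f ∈ M(X,𝒜) with f ∉ L^∞(μ) one has m_μ(f,1) ∩ L^∞(μ) = ∅, where 1 denotes the constant function with value 1. In particular, if L^∞(μ) ≠ M(X,𝒜) then the m_μ-topology on M(X,𝒜) is disconnected. -/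
/-!
By the triangle inequality, essential boundedness passes between any two functions at essential
distance less than `1`. Hence both `L^∞(μ)` and its complement contain `m_μ(g, 1)` around each of
their points `g`, so `L^∞(μ)` is clopen. It contains `0`, so in a connected topology it would be
all of `M(X, 𝒜)`.
-/

open MeasureTheory

/-- `L^∞(μ)`: the μ-essentially bounded measurable functions, as a subset of
`M(X,𝒜)`. -/
def Linf {X : Type*} [MeasurableSpace X] (μ : Measure X) : Set (Mring X) :=
  {f : Mring X | ∃ C : ℝ, 0 ≤ C ∧ μ {x : X | C < |(f : X → ℝ) x|} = 0}

/-- The `m_μ`-topology on `M(X,𝒜)`, generated by the basic neighbourhoods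
`m_μ(g, u) = {f : |f - g| < u  μ-a.e.}` for `g ∈ M(X,𝒜)` and positive units `u`. -/
def mMuTop {X : Type*} [MeasurableSpace X] (μ : Measure X) :
    TopologicalSpace (Mring X) :=
  TopologicalSpace.generateFrom
    {U : Set (Mring X) | ∃ g u : Mring X, (∀ x : X, 0 < (u : X → ℝ) x) ∧
      U = {f : Mring X | ∀ᵐ x ∂μ, |(f : X → ℝ) x - (g : X → ℝ) x| < (u : X → ℝ) x}}

/-- If `g` is essentially bounded by `C` and `|f - g| < 1` almost everywhere, then `f` is
essentially bounded by `C + 1`. -/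
theorem mem_Linf_of_ae_sub_lt_one {X : Type*} [MeasurableSpace X] {μ : Measure X}
    {f g : Mring X} (hg : g ∈ Linf μ)
    (h : ∀ᵐ x ∂μ, |(f : X → ℝ) x - (g : X → ℝ) x| < 1) : f ∈ Linf μ := by
  obtain ⟨C, hC, hμ⟩ := hg
  have hgC : ∀ᵐ x ∂μ, ¬ C < |(g : X → ℝ) x| := measure_eq_zero_iff_ae_notMem.mp hμ
  refine ⟨C + 1, by linarith, measure_eq_zero_iff_ae_notMem.mpr ?_⟩
  filter_upwards [hgC, h] with x hx hfg
  have htri := abs_sub_abs_le_abs_sub ((f : X → ℝ) x) ((g : X → ℝ) x)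
  change ¬ C + 1 < |(f : X → ℝ) x|
  linarith

/-- A set containing `m_μ(g, 1)` for each of its points `g` is open in the `m_μ`-topology. -/
theorem isOpen_mMuTop_of_forall {X : Type*} [MeasurableSpace X] {μ : Measure X}
    {S : Set (Mring X)}
    (hS : ∀ g ∈ S, ∀ f : Mring X,
      (∀ᵐ x ∂μ, |(f : X → ℝ) x - (g : X → ℝ) x| < 1) → f ∈ S) :
    @IsOpen _ (mMuTop μ) S := by
  let _ : TopologicalSpace (Mring X) := mMuTop μ
  refine isOpen_iff_forall_mem_open.mpr fun g hg =>
    ⟨{f : Mring X | ∀ᵐ x ∂μ, |(f : X → ℝ) x - (g : X → ℝ) x| < 1}, hS g hg, ?_, ?_⟩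
  · exact TopologicalSpace.isOpen_generateFrom_of_mem ⟨g, 1, fun _ => one_pos, rfl⟩
  · simp

/-- `L^∞(μ)` is clopen in the `m_μ`-topology: `m_μ(g,1) ⊆ L^∞(μ)` for
`g ∈ L^∞(μ)`, and `m_μ(f,1) ∩ L^∞(μ) = ∅` for `f ∉ L^∞(μ)`; hence if
`L^∞(μ) ≠ M(X,𝒜)` then the `m_μ`-topology is disconnected. -/
theorem stmt13 {X : Type*} [MeasurableSpace X] (μ : Measure X) :
    (∀ g ∈ Linf μ, ∀ f : Mring X,
        (∀ᵐ x ∂μ, |(f : X → ℝ) x - (g : X → ℝ) x| < 1) → f ∈ Linf μ) ∧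
    (∀ f : Mring X, f ∉ Linf μ → ∀ h ∈ Linf μ,
        ¬ (∀ᵐ x ∂μ, |(h : X → ℝ) x - (f : X → ℝ) x| < 1)) ∧
    (Linf μ ≠ Set.univ → ¬ @ConnectedSpace (Mring X) (mMuTop μ)) := by
  have hout : ∀ f : Mring X, f ∉ Linf μ → ∀ h ∈ Linf μ,
      ¬ (∀ᵐ x ∂μ, |(h : X → ℝ) x - (f : X → ℝ) x| < 1) := by
    intro f hf h hh hlt
    simp_rw [abs_sub_comm ((h : X → ℝ) _)] at hlt
    exact hf (mem_Linf_of_ae_sub_lt_one hh hlt)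
  refine ⟨fun g hg f h => mem_Linf_of_ae_sub_lt_one hg h, hout, fun hne hconn => ?_⟩
  let _ : TopologicalSpace (Mring X) := mMuTop μ
  have hclopen : IsClopen (Linf μ) :=
    ⟨⟨isOpen_mMuTop_of_forall (μ := μ) fun f hf h hlt hh => hout f hf h hh hlt⟩,
      isOpen_mMuTop_of_forall (μ := μ) fun g hg f h => mem_Linf_of_ae_sub_lt_one hg h⟩
  have hzero : (0 : Mring X) ∈ Linf μ := ⟨0, le_rfl, by simp⟩
  exact hne (hclopen.eq_univ ⟨0, hzero⟩)
end

section
/- Let (X,𝒜) be a measurable space whose σ-algebra 𝒜 is infinite (i.e., the collection of measurable subsets of X is infinite). Then there exists an ℝ-linear isometry φ from the Banach space ℓ^∞ of bounded real sequences (with supremum norm) into the space of bounded real-valued functions on X with the supremum norm, such that φ(a) is a measurable function for every a ∈ ℓ^∞ and the range of φ is a closed subspace. -/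
open MeasureTheory

/-!
An infinite σ-algebra on `X` admits a measurable surjection `N : X → ℕ`
(`exists_measurable_surjective_nat`), and then `a ↦ a ∘ N` embeds `ℓ^∞` linearly into the bounded
functions on `X`. Surjectivity of `N` makes it isometric, measurability of `N` makes every `a ∘ N`
measurable, and the range is closed because `ℓ^∞` is complete.

The surjection comes from a strictly decreasing sequence of measurable sets `A n`: each `A n` has
infinitely many measurable subsets, and such a set can be shrunk to a proper measurable subset of
the same kind (`BigSet.exists_ssubset`). Then `N x` is the index `n` with `x ∈ A n \ A (n + 1)`,
and `0` on the intersection of all the `A n`.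
-/

/-- A measurable set with infinitely many measurable subsets. -/
def BigSet {X : Type*} [MeasurableSpace X] (A : Set X) : Prop :=
  MeasurableSet A ∧ {s : Set X | MeasurableSet s ∧ s ⊆ A}.Infinite

/-- Split `A` along a measurable `B` with `∅ ≠ B ≠ A`. A measurable subset of `A` is determined by
its traces on `B` and `A \ B`, so at least one of these two pieces is again big. -/
lemma BigSet.exists_ssubset {X : Type*} [MeasurableSpace X] {A : Set X} (hA : BigSet A) :
    ∃ B, BigSet B ∧ B ⊂ A := by
  obtain ⟨hm, hinf⟩ := hA
  obtain ⟨B, ⟨hBm, hBA⟩, hB⟩ := hinf.exists_notMem_finset (Set.toFinite {∅, A}).toFinset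
  simp only [Set.Finite.mem_toFinset, Set.mem_insert_iff, Set.mem_singleton_iff, not_or] at hB
  by_cases h : {s : Set X | MeasurableSet s ∧ s ⊆ B}.Infinite
  · exact ⟨B, ⟨hBm, h⟩, hBA.ssubset_of_ne hB.2⟩
  refine ⟨A \ B, ⟨hm.diff hBm, fun h' => hinf ?_⟩, ?_⟩
  · refine ((Set.not_infinite.1 h).image2 (fun s t => s ∪ t) h').subset ?_
    rintro s ⟨hs, hsA⟩
    exact ⟨s ∩ B, ⟨hs.inter hBm, Set.inter_subset_right⟩, s \ B,
      ⟨hs.diff hBm, Set.sdiff_subset_sdiff_left hsA⟩, Set.inter_union_sdiff s B⟩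
  · refine Set.sdiff_subset.ssubset_of_ne fun h => ?_
    obtain ⟨x, hx⟩ := Set.nonempty_iff_ne_empty.2 hB.1
    exact (h.symm ▸ hBA hx : x ∈ A \ B).2 hx

lemma exists_measurable_surjective_nat {X : Type*} [MeasurableSpace X]
    (hA : {s : Set X | MeasurableSet s}.Infinite) :
    ∃ N : X → ℕ, Measurable N ∧ Function.Surjective N := by
  classical
  choose f hfbig hfsub using fun A : {A : Set X // BigSet A} => A.2.exists_ssubset
  let S : ℕ → {A : Set X // BigSet A} := fun n =>
    Nat.rec ⟨Set.univ, MeasurableSet.univ, by simpa using hA⟩ (fun _ A => ⟨f A, hfbig A⟩) n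
  let A : ℕ → Set X := fun n => (S n).1
  have hAm : ∀ n, MeasurableSet (A n) := fun n => (S n).2.1
  have hsub : ∀ n, A (n + 1) ⊂ A n := fun n => hfsub (S n)
  have hanti : Antitone A := antitone_nat_of_succ_le fun n => (hsub n).1
  -- The second alternative makes the search succeed, at `0`, on the intersection of the `A n`.
  have hp : ∀ x, ∃ n, x ∉ A (n + 1) ∨ ∀ m, x ∈ A m := by
    intro x
    by_cases h : ∀ m, x ∈ A m
    · exact ⟨0, Or.inr h⟩
    · push Not at h
      obtain ⟨m, hm⟩ := h
      exact ⟨m, Or.inl fun h => hm (hanti m.le_succ h)⟩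
  refine ⟨fun x => Nat.find (hp x), measurable_find hp fun k => ?_, fun n => ?_⟩
  · have : {x | x ∉ A (k + 1) ∨ ∀ m, x ∈ A m} = (A (k + 1))ᶜ ∪ ⋂ m, A m := by
      ext x; simp
    rw [this]
    exact (hAm (k + 1)).compl.union (MeasurableSet.iInter hAm)
  · obtain ⟨x, hx, hx'⟩ := Set.exists_of_ssubset (hsub n)
    refine ⟨x, (Nat.find_eq_iff _).2 ⟨Or.inl hx', fun m hmn h => ?_⟩⟩
    rcases h with h | h
    · exact h (hanti hmn hx)
    · exact hx' (h (n + 1))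

/-- If the σ-algebra of `X` is infinite, then there is a linear isometry from
`ℓ^∞` into the Banach space of bounded real-valued functions on `X` (with the
supremum norm, realized as bounded continuous functions for the discrete
topology on `X`), all of whose values are measurable functions and whose range
is closed. -/
theorem stmt14 {X : Type*} [MeasurableSpace X]
    (hA : {s : Set X | MeasurableSet s}.Infinite) :
    letI : TopologicalSpace X := ⊥
    ∃ φ : lp (fun _ : ℕ => ℝ) ⊤ →ₗ[ℝ] BoundedContinuousFunction X ℝ,
      Isometry φ ∧ (∀ a : lp (fun _ : ℕ => ℝ) ⊤, Measurable (φ a : X → ℝ)) ∧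
      IsClosed (Set.range φ) := by
  letI : TopologicalSpace X := ⊥
  have : DiscreteTopology X := ⟨rfl⟩
  obtain ⟨N, hN, hsurj⟩ := exists_measurable_surjective_nat hA
  let φ : lp (fun _ : ℕ => ℝ) ⊤ →ₗ[ℝ] BoundedContinuousFunction X ℝ :=
    { toFun := fun a => BoundedContinuousFunction.ofNormedAddCommGroup (fun x => a (N x))
        continuous_of_discreteTopology ‖a‖ fun x => lp.norm_apply_le_norm ENNReal.top_ne_zero a _
      map_add' := fun a b => by ext x; simp
      map_smul' := fun c a => by ext x; simp }
  have hφ : ∀ a x, φ a x = a (N x) := fun a x => rfl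
  have hiso : Isometry φ := by
    refine AddMonoidHomClass.isometry_of_norm φ fun a => le_antisymm ?_ ?_
    · exact (BoundedContinuousFunction.norm_le (norm_nonneg a)).2 fun x =>
        lp.norm_apply_le_norm ENNReal.top_ne_zero a _
    · refine lp.norm_le_of_forall_le (norm_nonneg _) fun n => ?_
      obtain ⟨x, rfl⟩ := hsurj n
      exact (φ a).norm_coe_le_norm x
  exact ⟨φ, hiso, fun a => (measurable_from_nat (f := fun n => a n)).comp hN,
    hiso.isClosedEmbedding.isClosed_range⟩
end

section
/- Let (X,𝒜) be a separated measurable space whose σ-algebra 𝒜 is infinite. Then M_F(X,𝒜) equals the intersection of all free ideals of M(X,𝒜): for every f ∈ M(X,𝒜), f ∈ M_F(X,𝒜) if and only if f belongs to every free ideal of M(X,𝒜). -/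
/-!
A function `f` with finite support lies in every free ideal `I`: for each point `p` of the support
choose a member of `I` that is nonzero at `p`; the sum `G` of the squares of these members is in
`I` and positive on the support, so `f = (f / G) * G` is in `I` (`mem_of_finite_support`).

If the support `S` of `f` is infinite, separatedness yields a decreasing sequence of nonempty
measurable subsets `A n` of `S` with empty intersection (`Separated.exists_antitone`). The
functions vanishing on some `A n` form an ideal. It is free, because the indicator of the
complement of `A n` is a member and the complements cover `X`. It does not contain `f`, which is
nowhere zero on `S`; in particular it is proper.
-/

open MeasureTheory

/-- `M_F(X,𝒜)`: measurable functions vanishing at all but finitely many points. -/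
def MF (X : Type*) [MeasurableSpace X] : Set (Mring X) :=
  {f : Mring X | {x : X | (f : X → ℝ) x ≠ 0}.Finite}

/-- `M_∞(X,𝒜)`: measurable functions "vanishing at infinity", i.e. for each
`ε > 0` the set `{x : |f(x)| ≥ ε}` is finite. -/
def Minf (X : Type*) [MeasurableSpace X] : Set (Mring X) :=
  {f : Mring X | ∀ ε : ℝ, 0 < ε → {x : X | ε ≤ |(f : X → ℝ) x|}.Finite}

/-- In a separated space an infinite measurable set splits into two nonempty measurable parts,
one of which is again infinite. -/
theorem Separated.exists_infinite_subset {X : Type*} [MeasurableSpace X] (hsep : Separated X)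
    {A : Set X} (hA : MeasurableSet A) (hinf : A.Infinite) :
    ∃ B ⊆ A, MeasurableSet B ∧ B.Infinite ∧ (A \ B).Nonempty := by
  obtain ⟨p, hp, q, hq, hpq⟩ := hinf.nontrivial
  obtain ⟨E, hE, hx⟩ := hsep p q hpq
  obtain ⟨h₁, h₂⟩ : (A ∩ E).Nonempty ∧ (A \ E).Nonempty := by
    rcases hx with ⟨h, h'⟩ | ⟨h, h'⟩
    · exact ⟨⟨p, hp, h⟩, ⟨q, hq, h'⟩⟩
    · exact ⟨⟨q, hq, h⟩, ⟨p, hp, h'⟩⟩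
  by_cases hi : (A ∩ E).Infinite
  · exact ⟨A ∩ E, Set.inter_subset_left, hA.inter hE, hi, by simpa using h₂⟩
  · refine ⟨A \ E, Set.sdiff_subset, hA.diff hE, fun hfin => hinf ?_, by simpa using h₁⟩
    rw [← Set.inter_union_sdiff A E]
    exact (Set.not_infinite.1 hi).union hfin

/-- Iterating the splitting gives a strictly decreasing sequence, from which its intersection is
removed; every term stays nonempty because it strictly contains the next one. -/
theorem Separated.exists_antitone {X : Type*} [MeasurableSpace X] (hsep : Separated X)
    {S : Set X} (hS : MeasurableSet S) (hinf : S.Infinite) :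
    ∃ A : ℕ → Set X, Antitone A ∧ (∀ n, MeasurableSet (A n)) ∧ (∀ n, (A n).Nonempty) ∧
      (∀ n, A n ⊆ S) ∧ ∀ x, ∃ n, x ∉ A n := by
  have key : ∀ A : {A : Set X // MeasurableSet A ∧ A.Infinite},
      ∃ B : {A : Set X // MeasurableSet A ∧ A.Infinite},
        B.1 ⊆ A.1 ∧ (A.1 \ B.1).Nonempty := by
    rintro ⟨A, hA, hi⟩
    obtain ⟨B, hBA, hB, hBi, hne⟩ := hsep.exists_infinite_subset hA hi
    exact ⟨⟨B, hB, hBi⟩, hBA, hne⟩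
  choose next hsub hne using key
  let C : ℕ → {A : Set X // MeasurableSet A ∧ A.Infinite} :=
    fun n => Nat.rec ⟨S, hS, hinf⟩ (fun _ => next) n
  have hC : Antitone fun n => (C n).1 := antitone_nat_of_succ_le fun n => hsub (C n)
  refine ⟨fun n => (C n).1 \ ⋂ k, (C k).1, fun m n hmn => Set.sdiff_subset_sdiff_left (hC hmn),
    fun n => (C n).2.1.diff (MeasurableSet.iInter fun k => (C k).2.1), fun n => ?_,
    fun n => Set.sdiff_subset.trans (hC (Nat.zero_le n)), fun x => ?_⟩
  · obtain ⟨x, hx, hx'⟩ := hne (C n)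
    exact ⟨x, hx, fun h => hx' (Set.mem_iInter.1 h (n + 1))⟩
  · by_contra! h
    exact (h 0).2 (Set.mem_iInter.2 fun k => (h k).1)

/-- The ideal of measurable functions that vanish on some member of a decreasing sequence of
sets. -/
def eventuallyZeroIdeal {X : Type*} [MeasurableSpace X] (A : ℕ → Set X) (hA : Antitone A) :
    Ideal (Mring X) where
  carrier := {g | ∃ n, ∀ x ∈ A n, (g : X → ℝ) x = 0}
  zero_mem' := ⟨0, fun _ _ => rfl⟩
  add_mem' := by
    rintro g h ⟨m, hm⟩ ⟨n, hn⟩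
    refine ⟨max m n, fun x hx => ?_⟩
    change (g : X → ℝ) x + (h : X → ℝ) x = 0
    rw [hm x (hA (le_max_left m n) hx), hn x (hA (le_max_right m n) hx), add_zero]
  smul_mem' := by
    rintro c g ⟨n, hn⟩
    refine ⟨n, fun x hx => ?_⟩
    change (c : X → ℝ) x * (g : X → ℝ) x = 0
    rw [hn x hx, mul_zero]

/-- A function with finite support lies in every ideal without common zeros: a finite sum of
squares of members of the ideal is positive on the support and divides the function. -/
theorem mem_of_finite_support {X : Type*} [MeasurableSpace X] {f : Mring X}
    (hf : f ∈ MF X) {I : Ideal (Mring X)} (hI : (⋂ g ∈ I, Zset g) = ∅) : f ∈ I := by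
  have hex : ∀ x : X, ∃ g ∈ I, (g : X → ℝ) x ≠ 0 := by
    intro x
    by_contra! h
    have hx : x ∈ ⋂ g ∈ I, Zset g := Set.mem_iInter₂.2 h
    rw [hI] at hx
    exact hx
  choose g hgI hg using hex
  have hfin : {x : X | (f : X → ℝ) x ≠ 0}.Finite := hf
  let G : Mring X := ∑ p ∈ hfin.toFinset, g p * g p
  have hGI : G ∈ I := I.sum_mem fun p _ => I.mul_mem_left _ (hgI p)
  have hG : ∀ x, (G : X → ℝ) x = ∑ p ∈ hfin.toFinset, (g p : X → ℝ) x * (g p : X → ℝ) x := by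
    intro x
    simp [G]
  let q : Mring X := ⟨fun x => (f : X → ℝ) x / (G : X → ℝ) x, Measurable.div f.2 G.2⟩
  have hfq : f = q * G := by
    ext x
    change (f : X → ℝ) x = (f : X → ℝ) x / (G : X → ℝ) x * (G : X → ℝ) x
    by_cases hx : (f : X → ℝ) x = 0
    · simp [hx]
    · have hpos : 0 < (G : X → ℝ) x := by
        rw [hG]
        exact Finset.sum_pos' (fun p _ => mul_self_nonneg _)
          ⟨x, hfin.mem_toFinset.2 hx, mul_self_pos.2 (hg x)⟩
      rw [div_mul_cancel₀ _ hpos.ne']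
  rw [hfq]
  exact I.mul_mem_left _ hGI

/-- For a separated measurable space with infinite σ-algebra, `M_F(X,𝒜)` is
the intersection of all free ideals of `M(X,𝒜)` (an ideal is free if it is
proper and the zero sets of its members have empty intersection). -/
theorem stmt15 {X : Type*} [MeasurableSpace X] (hsep : Separated X)
    (hA : {s : Set X | MeasurableSet s}.Infinite) (f : Mring X) :
    f ∈ MF X ↔
      ∀ I : Ideal (Mring X), I ≠ ⊤ → (⋂ g ∈ I, Zset g) = ∅ → f ∈ I := by
  refine ⟨fun hf I _ hI => mem_of_finite_support hf hI, fun h => ?_⟩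
  by_contra hf
  have hS : MeasurableSet {x : X | (f : X → ℝ) x ≠ 0} :=
    (f.2 (measurableSet_singleton (0 : ℝ))).compl
  obtain ⟨A, hanti, hmeas, hne, hsub, hempty⟩ := hsep.exists_antitone hS hf
  have hfI : f ∉ eventuallyZeroIdeal A hanti := by
    rintro ⟨n, hn⟩
    obtain ⟨x, hx⟩ := hne n
    exact hsub n hx (hn x hx)
  refine hfI (h _ (fun htop => hfI (htop ▸ Submodule.mem_top)) ?_)
  refine Set.eq_empty_of_forall_notMem fun x hx => ?_
  obtain ⟨n, hn⟩ := hempty x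
  -- The indicator of the complement of `A n` belongs to the ideal and is `1` at `x`.
  let e : Mring X := ⟨(A n)ᶜ.indicator 1, measurable_one.indicator (hmeas n).compl⟩
  have he : e ∈ eventuallyZeroIdeal A hanti :=
    ⟨n, fun y hy => Set.indicator_of_notMem (show y ∉ (A n)ᶜ from not_not.2 hy) _⟩
  have h0 : (A n)ᶜ.indicator (1 : X → ℝ) x = 0 := Set.mem_iInter₂.1 hx e he
  rw [Set.indicator_of_mem (show x ∈ (A n)ᶜ from hn)] at h0
  exact one_ne_zero h0
end

section
/- Let (X,𝒜) be a measurable space whose σ-algebra 𝒜 is infinite. Then M_F(X,𝒜) is a free ideal of M(X,𝒜) if and only if (X,𝒜) is locally finite. In particular: M_F(X,𝒜) is a proper ideal of M(X,𝒜), and ⋂_{f ∈ M_F(X,𝒜)} Z(f) = ∅ holds if and only if every point of X lies in a finite measurable set. -/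
/-!
An infinite `σ`-algebra forces `X` to be infinite, so the constant function `1` lies outside
`M_F`. Freeness and local finiteness are matched by passing between a function `f ∈ M_F` with
`f x ≠ 0` and the finite measurable set `{f ≠ 0}`, and between a finite measurable set `A`
containing `x` and its indicator function.
-/

open MeasureTheory

/-- If the σ-algebra is infinite, then `M_F(X,𝒜)` is a proper ideal of
`M(X,𝒜)`; and it is free (the zero sets of its members have empty
intersection) iff `(X,𝒜)` is locally finite, i.e. every point lies in a
finite measurable set. -/
theorem stmt16 {X : Type*} [MeasurableSpace X]
    (hA : {s : Set X | MeasurableSet s}.Infinite) :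
    (∃ f : Mring X, f ∉ MF X) ∧
    ((⋂ f ∈ MF X, Zset f) = ∅ ↔
      ∀ x : X, ∃ A : Set X, MeasurableSet A ∧ x ∈ A ∧ A.Finite) := by
  refine ⟨⟨1, fun h => hA ?_⟩, fun h x => ?_, fun h => ?_⟩
  · -- If `1 ∈ M_F`, then `X` is finite, so it has only finitely many subsets.
    have hfin : (Set.univ : Set X).Finite := by simpa [MF] using h
    have : Finite X := Set.finite_univ_iff.mp hfin
    exact Set.toFinite _
  · have hx : x ∉ ⋂ f ∈ MF X, Zset f := h ▸ Set.notMem_empty x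
    simp only [Set.mem_iInter, not_forall] at hx
    obtain ⟨f, hf, hfx⟩ := hx
    exact ⟨{y | (f : X → ℝ) y ≠ 0}, f.2 (measurableSet_singleton 0).compl, hfx, hf⟩
  · refine Set.eq_empty_iff_forall_notMem.mpr fun x hx => ?_
    obtain ⟨A, hAm, hxA, hAf⟩ := h x
    let f : Mring X := ⟨A.indicator 1, measurable_one.indicator hAm⟩
    have hf : f ∈ MF X := hAf.subset fun _ hy => Set.mem_of_indicator_ne_zero hy
    have hfx : A.indicator (1 : X → ℝ) x = 0 := Set.mem_iInter₂.mp hx f hf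
    simp [hxA] at hfx
end

section
/- Let (X,𝒜) be a locally finite measurable space. Then the following three statements are equivalent: (1) 𝒜 is a finite σ-algebra (the collection of measurable subsets of X is finite); (2) M_F(X,𝒜) = M_∞(X,𝒜); (3) M_∞(X,𝒜) is an ideal (possibly improper) of M(X,𝒜), i.e., for every f ∈ M_∞(X,𝒜) and every g ∈ M(X,𝒜), the product f·g belongs to M_∞(X,𝒜). -/
/-!
All three conditions are equivalent to finiteness of `X`. If `X` is finite they hold trivially.
If `X` is infinite, the finite measurable sets around an injective sequence of points give a
measurable `h : X → ℕ` with infinite support all of whose nonzero fibres are finite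
(`exists_measurable_nat`). Then `h⁻¹` (with `0⁻¹ = 0`) lies in `M_∞` but not in `M_F`, and its
product with `h` is the indicator of an infinite set, so `M_∞` is not an ideal. Condition (1)
fails too, since `X` is covered by its finite measurable sets.
-/

open MeasureTheory

/-- A measurable `ℕ`-valued function tending to infinity along its (infinite) support: it labels
the pieces of a disjointed sequence of finite measurable sets, and is `0` off their union. -/
theorem exists_measurable_nat {X : Type*} [MeasurableSpace X] [Infinite X]
    (hlf : ∀ x : X, ∃ A : Set X, MeasurableSet A ∧ x ∈ A ∧ A.Finite) :
    ∃ h : X → ℕ, Measurable h ∧ {x | h x ≠ 0}.Infinite ∧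
      ∀ n : ℕ, n ≠ 0 → {x | h x = n}.Finite := by
  classical
  choose A hAm hxA hAf using hlf
  let e : ℕ ↪ X := Infinite.natEmbedding X
  -- `h x` is the least index of a member of this cover containing `x`;
  -- index `0` is the complement of all the chosen finite sets.
  let B : ℕ → Set X := fun
    | 0 => (⋃ k, A (e k))ᶜ
    | k + 1 => A (e k)
  have hB : ∀ x, ∃ n, x ∈ B n := by
    intro x
    by_cases hx : x ∈ ⋃ k, A (e k)
    · obtain ⟨k, hk⟩ := Set.mem_iUnion.1 hx
      exact ⟨k + 1, hk⟩
    · exact ⟨0, hx⟩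
  let h : X → ℕ := fun x => Nat.find (hB x)
  have hspec : ∀ x, x ∈ B (h x) := fun x => Nat.find_spec (hB x)
  refine ⟨h, measurable_find hB ?_, ?_, ?_⟩
  · rintro (_ | k)
    · exact (MeasurableSet.iUnion fun k => hAm (e k)).compl
    · exact hAm (e k)
  · refine (Set.infinite_range_of_injective e.injective).mono ?_
    rintro _ ⟨k, rfl⟩ h0
    have h1 : e k ∈ B 0 := by
      have h2 := hspec (e k)
      rwa [h0] at h2
    exact h1 (Set.mem_iUnion.2 ⟨k, hxA _⟩)
  · rintro (_ | k) hn
    · exact absurd rfl hn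
    · refine (hAf (e k)).subset ?_
      intro x hx
      have h2 := hspec x
      rwa [show h x = k + 1 from hx] at h2

/-- On an infinite locally finite space, `h⁻¹` and `h` witness the failure of (2) and (3). -/
theorem exists_mem_Minf {X : Type*} [MeasurableSpace X] [Infinite X]
    (hlf : ∀ x : X, ∃ A : Set X, MeasurableSet A ∧ x ∈ A ∧ A.Finite) :
    ∃ f ∈ Minf X, f ∉ MF X ∧ ∃ g : Mring X, f * g ∉ Minf X := by
  obtain ⟨h, hm, hinf, hfin⟩ := exists_measurable_nat hlf
  have hmR : Measurable fun x => (h x : ℝ) := measurable_from_nat.comp hm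
  refine ⟨⟨fun x => (h x : ℝ)⁻¹, hmR.inv⟩, ?_, ?_, ⟨fun x => (h x : ℝ), hmR⟩, ?_⟩
  · intro ε hε
    obtain ⟨N, hN⟩ := exists_nat_ge ε⁻¹
    -- `ε ≤ 1 / h x` forces `1 ≤ h x ≤ N`.
    refine ((Set.finite_Icc 1 N).biUnion fun n hn => hfin n (by grind)).subset ?_
    intro x hx
    replace hx : ε ≤ |(h x : ℝ)⁻¹| := hx
    rw [abs_of_nonneg (by positivity)] at hx
    have hpos : (0 : ℝ) < h x := inv_pos.1 (hε.trans_le hx)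
    have hle : (h x : ℝ) ≤ N := (le_inv_comm₀ hε hpos |>.1 hx).trans hN
    exact Set.mem_biUnion (x := h x)
      ⟨by exact_mod_cast hpos, by exact_mod_cast hle⟩ rfl
  · intro hF
    refine hinf (Set.Finite.subset hF ?_)
    intro x hx
    exact inv_ne_zero (Nat.cast_ne_zero.2 hx)
  · intro hI
    refine hinf ((hI 1 one_pos).subset ?_)
    intro x hx
    have hx' : (h x : ℝ) ≠ 0 := Nat.cast_ne_zero.2 hx
    change 1 ≤ |(h x : ℝ)⁻¹ * (h x : ℝ)|
    rw [inv_mul_cancel₀ hx', abs_one]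

/-- Finitely many finite measurable sets cannot cover an infinite space. -/
theorem infinite_measurableSets {X : Type*} [MeasurableSpace X] [Infinite X]
    (hlf : ∀ x : X, ∃ A : Set X, MeasurableSet A ∧ x ∈ A ∧ A.Finite) :
    ¬ {s : Set X | MeasurableSet s}.Finite := by
  intro hfin
  have hsub : {s : Set X | MeasurableSet s ∧ s.Finite}.Finite :=
    hfin.subset fun s hs => hs.1
  refine Set.infinite_univ (α := X) ((hsub.sUnion fun s hs => hs.2).subset ?_)
  intro x _
  obtain ⟨A, hA, hx, hf⟩ := hlf x
  exact ⟨A, ⟨hA, hf⟩, hx⟩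

/-- For a locally finite measurable space the following are equivalent:
(1) the σ-algebra is finite; (2) `M_F(X,𝒜) = M_∞(X,𝒜)`;
(3) `M_∞(X,𝒜)` is an ideal (possibly improper) of `M(X,𝒜)`, i.e. it is
closed under multiplication by arbitrary elements of `M(X,𝒜)`. -/
theorem stmt17 {X : Type*} [MeasurableSpace X]
    (hlf : ∀ x : X, ∃ A : Set X, MeasurableSet A ∧ x ∈ A ∧ A.Finite) :
    ({s : Set X | MeasurableSet s}.Finite ↔ MF X = Minf X) ∧
    (MF X = Minf X ↔ ∀ f ∈ Minf X, ∀ g : Mring X, f * g ∈ Minf X) := by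
  rcases finite_or_infinite X with hX | hX
  · have h2 : MF X = Minf X :=
      Set.ext fun f => ⟨fun _ _ _ => Set.toFinite _, fun _ => Set.toFinite _⟩
    exact ⟨iff_of_true (Set.toFinite _) h2,
      iff_of_true h2 fun _ _ _ _ _ => Set.toFinite _⟩
  · obtain ⟨f, hf, hfF, g, hfg⟩ := exists_mem_Minf hlf
    have h2 : MF X ≠ Minf X := fun h => hfF (h ▸ hf)
    exact ⟨iff_of_false (infinite_measurableSets hlf) h2,
      iff_of_false h2 fun h => hfg (h f hf g)⟩
end
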